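/- Let p be an odd prime and d a positive even integer with p ≡ 1 (mod d). Then Σ_{k=0}^{(p−1)/d} (−1)^k (2dk+1) (1/d)_k^3 / k!^3 ≡ (−1)^{(p−1)/d} · p (mod p^3). -/

import Mathlib

open Finset

/-- The Pochhammer symbol `(a)_k = a(a+1)⋯(a+k-1)` for rational `a`. -/
def poch (a : ℚ) (k : ℕ) : ℚ := ∏ j ∈ Finset.range k, (a + j)

/-!
Put `N = nd + 1`. Replacing two of the three factors `u` in each cube `u³` by `u ± x` turns the sum
into a rational function of `y = x²` that interpolates between the sum to be evaluated (`y = 0`) and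
a terminating well-poised hypergeometric sum (`y = N²`), whose value is `(-1)ⁿ N`. After clearing
denominators, the difference `f(y)` between the deformed sum and `(-1)ⁿ N` is a polynomial with
`f(N²) = 0`. Modulo `N` the terms with indices `k` and `n - k` cancel because `u (u² - y)` is odd in
`u`, so `f = N g` with `g` integral. Hence `f(0) = N (g(0) - g(N²))` is divisible by `N · N²`.
-/

section Pochhammer

lemma poch_zero (a : ℚ) : poch a 0 = 1 := prod_range_zero _

lemma poch_succ (a : ℚ) (k : ℕ) : poch a (k + 1) = poch a k * (a + k) :=
  prod_range_succ _ _

lemma poch_add (a : ℚ) (m k : ℕ) : poch a (m + k) = poch a m * poch (a + m) k := by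
  simp only [poch, prod_range_add, Nat.cast_add, add_assoc]

lemma poch_ne_zero {a : ℚ} {k : ℕ} (h : ∀ j < k, a + j ≠ 0) : poch a k ≠ 0 :=
  prod_ne_zero_iff.mpr fun j hj => h j (mem_range.mp hj)

lemma poch_one (k : ℕ) : poch 1 k = k.factorial := by
  simp only [poch, ← prod_range_add_one_eq_factorial, Nat.cast_prod, Nat.cast_add, Nat.cast_one,
    add_comm]

lemma mul_poch_one_add (a : ℚ) (n : ℕ) : a * poch (1 + a) n = poch a n * (a + n) := by
  rw [← poch_succ, add_comm n 1, poch_add, poch_succ, poch_zero, Nat.cast_zero, add_zero, one_mul,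
    Nat.cast_one, add_comm a 1]

lemma poch_one_sub_sub (a : ℚ) (n : ℕ) : poch (1 - n - a) n = (-1) ^ n * poch a n := by
  have hneg : (-1) ^ n * poch a n = ∏ j ∈ range n, -(a + j) := by
    rw [prod_neg, card_range, poch]
  rw [hneg, poch, ← prod_range_reflect]
  refine prod_congr rfl fun j hj => ?_
  have hj : j < n := mem_range.mp hj
  rw [Nat.sub_sub, Nat.cast_sub (by omega)]
  push_cast
  ring

lemma poch_neg_natCast (n k : ℕ) : poch (-n) k = (-1) ^ k * k.factorial * n.choose k := by
  have h : poch (-n) k = (-1) ^ k * n.descFactorial k := by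
    rw [← descPochhammer_eval_eq_descFactorial, descPochhammer_eval_eq_prod_range]
    simpa only [poch, neg_sub, neg_add_eq_sub, card_range] using
      prod_neg (s := range k) fun j => (n - j : ℚ)
  rw [h, Nat.descFactorial_eq_factorial_mul_choose, Nat.cast_mul, mul_assoc]

end Pochhammer

section WellPoised

lemma cast_choose_succ_mul {R : Type*} [CommRing R] (n k : ℕ) :
    (n.choose (k + 1) : R) * (k + 1) = n.choose k * (n - k) := by
  have h : ((n + 1) * n.choose k : R) = (n.choose k + n.choose (k + 1)) * (k + 1) := by
    exact_mod_cast congrArg (Nat.cast : ℕ → R)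
      (Nat.choose_succ_succ n k ▸ Nat.add_one_mul_choose_eq n k)
  linear_combination -h

/-- The `k`-th term of the terminating well-poised sum with parameter `-n`, normalized so that its
sum over `k` does not depend on `n`. The factor `(-n)_k` appears as a binomial coefficient, and
`(1+a)_n (1+a+n)_k` as `(1+a)_{n+k}`. -/
def wzTerm (a b : ℚ) (n k : ℕ) : ℚ :=
  n.choose k * (a + 2 * k) * poch a k * poch b k * poch (1 + a - b) n /
    (poch (1 + a - b) k * poch (1 + a) (n + k))

/-- The Wilf–Zeilberger mate of `wzTerm`, indexed so that its value at `k` belongs to the partial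
sum up to and including `k`. -/
def wzMate (a b : ℚ) (n k : ℕ) : ℚ :=
  -(n.choose k * poch a (k + 1) * poch b (k + 1) * poch (1 + a - b) n /
    (poch (1 + a - b) k * poch (1 + a) (n + k + 1)))

variable {a b : ℚ} {n : ℕ}

lemma wzTerm_succ_zero_sub (ha : ∀ j : ℕ, 1 + a + j ≠ 0) :
    wzTerm a b (n + 1) 0 - wzTerm a b n 0 = wzMate a b n 0 := by
  have hn : poch (1 + a) n ≠ 0 := poch_ne_zero fun j _ => ha j
  have hn' := ha n
  simp only [wzTerm, wzMate, poch_zero, poch_succ, Nat.choose_zero_right, add_zero]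
  push_cast
  field_simp
  ring

lemma wzTerm_succ_sub {k : ℕ} (ha : ∀ j : ℕ, 1 + a + j ≠ 0)
    (hb : ∀ j < k + 1, 1 + a - b + j ≠ 0) :
    wzTerm a b (n + 1) (k + 1) - wzTerm a b n (k + 1) = wzMate a b n (k + 1) - wzMate a b n k := by
  have hbk : poch (1 + a - b) k ≠ 0 := poch_ne_zero fun j hj => hb j (by omega)
  have hbk' := hb k k.lt_succ_self
  have hank : poch (1 + a) (n + k) ≠ 0 := poch_ne_zero fun j _ => ha j
  have hank' := ha (n + k)
  have hank'' := ha (n + k + 1)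
  have hn₁ : n + 1 + (k + 1) = n + k + 1 + 1 := by ring
  have hn₂ : n + (k + 1) = n + k + 1 := by ring
  simp only [wzTerm, wzMate, hn₁, hn₂, poch_succ, Nat.choose_succ_succ]
  push_cast at *
  field_simp
  linear_combination -(poch (1 + a - b) n * poch a k * poch b k * (a + k) * (b + k) *
    (1 + b + k)) * cast_choose_succ_mul (R := ℚ) n k

lemma sum_wzTerm_succ_sub {m : ℕ} (ha : ∀ j : ℕ, 1 + a + j ≠ 0)
    (hb : ∀ j < m, 1 + a - b + j ≠ 0) :
    ∑ k ∈ range (m + 1), (wzTerm a b (n + 1) k - wzTerm a b n k) = wzMate a b n m := by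
  induction m with
  | zero => simpa only [zero_add, sum_range_one] using wzTerm_succ_zero_sub ha
  | succ m ih =>
    rw [sum_range_succ, ih fun j hj => hb j (by omega), wzTerm_succ_sub ha hb]
    ring

lemma sum_wzTerm (ha : ∀ j : ℕ, 1 + a + j ≠ 0) (hb : ∀ j < n, 1 + a - b + j ≠ 0) :
    ∑ k ∈ range (n + 1), wzTerm a b n k = a := by
  induction n with
  | zero => simp [wzTerm, poch_zero]
  | succ n ih =>
    have hmate : wzMate a b n (n + 1) = 0 := by simp [wzMate]
    have hlast : wzTerm a b n (n + 1) = 0 := by simp [wzTerm]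
    have h := sum_wzTerm_succ_sub (n := n) ha hb
    rw [sum_sub_distrib, hmate, sum_range_succ (wzTerm a b n), hlast, add_zero,
      ih fun j hj => hb j (by omega)] at h
    exact sub_eq_zero.mp h

/-- The `k`-th term of the well-poised hypergeometric series `₄F₃(-1)` with parameters
`a, 1 + a/2, b, c`, multiplied by `a`. -/
def wellPoisedTerm (a b c : ℚ) (k : ℕ) : ℚ :=
  (-1) ^ k * (a + 2 * k) * poch a k * poch b k * poch c k /
    (k.factorial * poch (1 + a - b) k * poch (1 + a - c) k)

lemma wellPoisedTerm_neg_natCast (ha : ∀ j : ℕ, 1 + a + j ≠ 0)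
    (hb : ∀ j < n, 1 + a - b + j ≠ 0) (k : ℕ) :
    wellPoisedTerm a b (-n) k = poch (1 + a) n / poch (1 + a - b) n * wzTerm a b n k := by
  have hbn : poch (1 + a - b) n ≠ 0 := poch_ne_zero hb
  have han : poch (1 + a) n ≠ 0 := poch_ne_zero fun j _ => ha j
  have hk : (k.factorial : ℚ) ≠ 0 := by positivity
  have hsq : ((-1 : ℚ) ^ k) ^ 2 = 1 := by rw [pow_right_comm, neg_one_sq, one_pow]
  rw [wellPoisedTerm, wzTerm, poch_neg_natCast, sub_neg_eq_add, poch_add]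
  field_simp
  rw [hsq]
  ring

theorem sum_wellPoisedTerm_neg_natCast (ha : ∀ j : ℕ, 1 + a + j ≠ 0)
    (hb : ∀ j < n, 1 + a - b + j ≠ 0) :
    ∑ k ∈ range (n + 1), wellPoisedTerm a b (-n) k =
      a * poch (1 + a) n / poch (1 + a - b) n := by
  rw [sum_congr rfl fun k _ => wellPoisedTerm_neg_natCast ha hb k, ← mul_sum, sum_wzTerm ha hb]
  ring

end WellPoised

section Cubic

variable {R S : Type*} [CommRing R] [CommRing S]

/-- The cubic `u (u² - y)`, a deformation of `u³` that is still odd in `u`. -/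
def oddCubic (y u : R) : R := u * (u ^ 2 - y)

lemma oddCubic_neg (y u : R) : oddCubic y (-u) = -oddCubic y u := by
  simp only [oddCubic]; ring

lemma map_oddCubic (f : R →+* S) (y u : R) : f (oddCubic y u) = oddCubic (f y) (f u) := by
  simp only [oddCubic, map_mul, map_sub, map_pow]

/-- The common denominator of the deformed sum, equal to `(dⁿ n!)³` at `y = 0`. -/
def cubicDenom (d y : R) (n : ℕ) : R := ∏ j ∈ Ico 1 (n + 1), oddCubic y (j * d)

/-- The `k`-th term of the deformed sum after clearing the denominator `cubicDenom d y n`.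
At `y = 0` the two products are `(d^k (1/d)_k)³` and `(d^(n-k) n!/k!)³`. -/
def cubicTerm (d y : R) (n k : ℕ) : R :=
  (-1) ^ k * (2 * d * k + 1) * (∏ j ∈ range k, oddCubic y (1 + j * d)) *
    ∏ j ∈ Ico (k + 1) (n + 1), oddCubic y (j * d)

/-- The numerator of the deformed sum `∑ (-1)^k (2dk+1) ∏_{j<k} g(1+jd) / ∏_{1≤j≤k} g(jd)`, where
`g(u) = u (u² - y)`. -/
def cubicSum (d y : R) (n : ℕ) : R := ∑ k ∈ range (n + 1), cubicTerm d y n k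

lemma map_cubicDenom (f : R →+* S) (d y : R) (n : ℕ) :
    f (cubicDenom d y n) = cubicDenom (f d) (f y) n := by
  simp only [cubicDenom, map_prod, map_oddCubic, map_mul, map_natCast]

lemma map_cubicSum (f : R →+* S) (d y : R) (n : ℕ) :
    f (cubicSum d y n) = cubicSum (f d) (f y) n := by
  simp only [cubicSum, cubicTerm, map_sum, map_prod, map_oddCubic, map_mul, map_pow, map_neg,
    map_add, map_one, map_natCast, map_ofNat]

lemma cubicTerm_of_mul_add_one_eq_zero {d : R} (y : R) {n k : ℕ} (hd : n * d + 1 = 0)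
    (hk : k ≤ n) :
    cubicTerm d y n k = (2 * d * k + 1) *
      ((∏ j ∈ Ico (n - k + 1) (n + 1), oddCubic y (j * d)) *
        ∏ j ∈ Ico (k + 1) (n + 1), oddCubic y (j * d)) := by
  have hneg (j : ℕ) (hj : j ∈ range k) :
      oddCubic y (1 + j * d) = -oddCubic y ((n - j : ℕ) * d) := by
    have hj : j < k := mem_range.mp hj
    rw [← oddCubic_neg, Nat.cast_sub (by omega)]
    congr 1
    linear_combination hd
  have hprod : ∏ j ∈ range k, oddCubic y (1 + j * d) =
      (-1) ^ k * ∏ j ∈ Ico (n - k + 1) (n + 1), oddCubic y (j * d) := by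
    rw [prod_congr rfl hneg, prod_neg, card_range, range_eq_Ico,
      prod_Ico_reflect (fun j : ℕ => oddCubic y (j * d)) 0 (by omega), Nat.sub_zero,
      Nat.succ_sub hk]
  have hsq : ((-1 : R) ^ k) * (-1) ^ k = 1 := by
    rw [← sq, pow_right_comm, neg_one_sq, one_pow]
  rw [cubicTerm, hprod]
  linear_combination ((2 * d * k + 1) *
      ((∏ j ∈ Ico (n - k + 1) (n + 1), oddCubic y (j * d)) *
        ∏ j ∈ Ico (k + 1) (n + 1), oddCubic y (j * d))) * hsq

lemma cubicTerm_reflect {d : R} (y : R) {n k : ℕ} (hd : n * d + 1 = 0) (hk : k ≤ n) :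
    cubicTerm d y n (n - k) = -cubicTerm d y n k := by
  rw [cubicTerm_of_mul_add_one_eq_zero y hd hk,
    cubicTerm_of_mul_add_one_eq_zero y hd (n.sub_le k), Nat.sub_sub_self hk, Nat.cast_sub hk,
    mul_comm (∏ j ∈ Ico (k + 1) (n + 1), _), ← neg_mul]
  congr 1
  linear_combination 2 * hd

lemma two_mul_cubicSum_eq_zero {d : R} (y : R) {n : ℕ} (hd : n * d + 1 = 0) :
    2 * cubicSum d y n = 0 := by
  have h : cubicSum d y n = -cubicSum d y n := by
    conv_lhs => rw [cubicSum, ← sum_range_reflect]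
    rw [cubicSum, ← sum_neg_distrib]
    exact sum_congr rfl fun k hk => cubicTerm_reflect y hd (mem_range_succ_iff.mp hk)
  linear_combination h

/-- The numerator of the difference between the deformed sum and the value `(-1)ⁿ (nd + 1)`
that it takes at `y = (nd + 1)²`. -/
def cubicDefect (d y : R) (n : ℕ) : R :=
  cubicSum d y n - (-1) ^ n * (n * d + 1) * cubicDenom d y n

lemma map_cubicDefect (f : R →+* S) (d y : R) (n : ℕ) :
    f (cubicDefect d y n) = cubicDefect (f d) (f y) n := by
  simp only [cubicDefect, map_sub, map_mul, map_add, map_pow, map_neg, map_one, map_natCast,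
    map_cubicSum, map_cubicDenom]

lemma intCast_cubicDefect (d y : ℤ) (n : ℕ) :
    ((cubicDefect d y n : ℤ) : R) = cubicDefect (d : R) (y : R) n :=
  map_cubicDefect (Int.castRingHom R) d y n

theorem dvd_cubicSum {d : R} (y : R) {n : ℕ} (h2 : IsCoprime (n * d + 1) 2) :
    n * d + 1 ∣ cubicSum d y n := by
  refine h2.dvd_of_dvd_mul_left ?_
  rw [← Ideal.Quotient.eq_zero_iff_dvd, map_mul, map_ofNat, map_cubicSum]
  refine two_mul_cubicSum_eq_zero _ ?_
  rw [← map_natCast (Ideal.Quotient.mk (Ideal.span {n * d + 1})), ← map_mul,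
    ← map_one (Ideal.Quotient.mk _), ← map_add, Ideal.Quotient.mk_singleton_self]

lemma dvd_cubicDefect {d : R} (y : R) {n : ℕ} (h2 : IsCoprime (n * d + 1) 2) :
    n * d + 1 ∣ cubicDefect d y n :=
  dvd_sub (dvd_cubicSum y h2) ((dvd_mul_left _ _).mul_right _)

end Cubic

section Evaluation

lemma prod_oddCubic_sq {d : ℚ} (hd : d ≠ 0) (c x : ℚ) (k : ℕ) :
    ∏ j ∈ range k, oddCubic (x ^ 2) (c + j * d) =
      d ^ (3 * k) * (poch (c / d) k * poch ((c + x) / d) k * poch ((c - x) / d) k) := by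
  induction k with
  | zero => simp [poch_zero]
  | succ k ih =>
    rw [prod_range_succ, ih, poch_succ, poch_succ, poch_succ, oddCubic]
    field_simp
    ring

lemma cubicDenom_sq {d : ℚ} (hd : d ≠ 0) (x : ℚ) (n : ℕ) :
    cubicDenom d (x ^ 2) n =
      d ^ (3 * n) * (n.factorial * poch (1 + x / d) n * poch (1 - x / d) n) := by
  have h := prod_oddCubic_sq hd d x n
  rw [div_self hd, poch_one, add_div, sub_div, div_self hd] at h
  rw [← h, cubicDenom, prod_Ico_eq_prod_range, Nat.add_sub_cancel]
  refine prod_congr rfl fun j _ => ?_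
  push_cast
  ring_nf

lemma cubicDenom_zero {R : Type*} [CommRing R] (d : R) (n : ℕ) :
    cubicDenom d 0 n = (d ^ n * n.factorial) ^ 3 := by
  have hprod : ∏ j ∈ Ico 1 (n + 1), (j * d) = d ^ n * n.factorial := by
    rw [← prod_Ico_id_eq_factorial, Nat.cast_prod, prod_mul_distrib, prod_const, Nat.card_Ico,
      Nat.add_sub_cancel, mul_comm]
  simp only [cubicDenom, oddCubic, sub_zero, ← pow_succ', Nat.reduceAdd, prod_pow, hprod]

variable {d : ℚ} {n k : ℕ}

lemma cubicTerm_sq {x : ℚ} (hd : d ≠ 0) (hx : cubicDenom d (x ^ 2) n ≠ 0) (hk : k ≤ n) :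
    cubicTerm d (x ^ 2) n k = cubicDenom d (x ^ 2) n *
      (d * wellPoisedTerm (1 / d) ((1 + x) / d) ((1 - x) / d) k) := by
  have hsplit : cubicDenom d (x ^ 2) k * ∏ j ∈ Ico (k + 1) (n + 1), oddCubic (x ^ 2) (j * d) =
      cubicDenom d (x ^ 2) n := prod_Ico_consecutive _ (by omega) (by omega)
  rw [← hsplit] at hx ⊢
  have hxk := left_ne_zero_of_mul hx
  rw [cubicDenom_sq hd] at hxk ⊢
  have hminus : poch (1 - x / d) k ≠ 0 := right_ne_zero_of_mul (right_ne_zero_of_mul hxk)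
  have hplus : poch (1 + x / d) k ≠ 0 :=
    right_ne_zero_of_mul (left_ne_zero_of_mul (right_ne_zero_of_mul hxk))
  have hb : 1 + 1 / d - (1 + x) / d = 1 - x / d := by ring
  have hc : 1 + 1 / d - (1 - x) / d = 1 + x / d := by ring
  rw [cubicTerm, prod_oddCubic_sq hd, wellPoisedTerm, hb, hc]
  generalize poch (1 - x / d) k = u at *
  generalize poch (1 + x / d) k = v at *
  field_simp
  ring

lemma cubicSum_sq {x : ℚ} (hd : d ≠ 0) (hx : cubicDenom d (x ^ 2) n ≠ 0) :
    cubicSum d (x ^ 2) n = cubicDenom d (x ^ 2) n *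
      (d * ∑ k ∈ range (n + 1), wellPoisedTerm (1 / d) ((1 + x) / d) ((1 - x) / d) k) := by
  rw [cubicSum, mul_sum, mul_sum]
  exact sum_congr rfl fun k hk => cubicTerm_sq hd hx (mem_range_succ_iff.mp hk)

lemma cubicDenom_sq_mul_add_one_ne_zero (hd : 0 < d) (n : ℕ) :
    cubicDenom d ((n * d + 1) ^ 2) n ≠ 0 := by
  refine prod_ne_zero_iff.mpr fun j hj => ?_
  obtain ⟨hj₁, hjn⟩ := mem_Ico.mp hj
  have hpos : 0 < j * d := mul_pos (by exact_mod_cast hj₁) hd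
  have hlt : j * d < n * d + 1 := by
    have : (j : ℚ) ≤ n := by exact_mod_cast Nat.lt_succ_iff.mp hjn
    nlinarith
  exact mul_ne_zero hpos.ne' (sub_neg.mpr (pow_lt_pow_left₀ hlt hpos.le two_ne_zero)).ne

theorem cubicDefect_sq_mul_add_one (hd : 0 < d) (n : ℕ) :
    cubicDefect d ((n * d + 1) ^ 2) n = 0 := by
  have hc : (1 - (n * d + 1)) / d = -n := by field_simp; ring
  have hb : 1 + 1 / d - (1 + (n * d + 1)) / d = 1 - n - 1 / d := by field_simp; ring
  have hdenom (j : ℕ) (hj : j < n) : 1 + 1 / d - (1 + (n * d + 1)) / d + j ≠ 0 := by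
    have : (j : ℚ) + 1 ≤ n := by exact_mod_cast hj
    have : 0 < 1 / d := by positivity
    rw [hb]
    linarith
  have hpoch : poch (1 / d) n ≠ 0 := poch_ne_zero fun j _ => by positivity
  have hratio : d * (1 / d * poch (1 + 1 / d) n / poch (1 - n - 1 / d) n) =
      (-1) ^ n * (n * d + 1) := by
    have hsq : ((-1 : ℚ) ^ n) ^ 2 = 1 := by rw [pow_right_comm, neg_one_sq, one_pow]
    rw [mul_poch_one_add, poch_one_sub_sub]
    field_simp
    rw [hsq]
    ring
  rw [cubicDefect, cubicSum_sq hd.ne' (cubicDenom_sq_mul_add_one_ne_zero hd n), hc,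
    sum_wellPoisedTerm_neg_natCast (fun j => by positivity) hdenom, hb, hratio, mul_comm, sub_self]

lemma cubicDefect_zero (hd : d ≠ 0) (n : ℕ) :
    cubicDefect d 0 n = (d ^ n * n.factorial) ^ 3 *
      (∑ k ∈ range (n + 1),
        (-1) ^ k * (2 * d * k + 1) * poch (1 / d) k ^ 3 / (k.factorial : ℚ) ^ 3 -
      (-1) ^ n * (n * d + 1)) := by
  have hterm (k : ℕ) : d * wellPoisedTerm (1 / d) ((1 + 0) / d) ((1 - 0) / d) k =
      (-1) ^ k * (2 * d * k + 1) * poch (1 / d) k ^ 3 / (k.factorial : ℚ) ^ 3 := by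
    rw [wellPoisedTerm, add_zero, sub_zero, add_sub_cancel_right, poch_one]
    field_simp
    ring
  have hdenom : cubicDenom d (0 ^ 2) n ≠ 0 := by
    rw [zero_pow two_ne_zero, cubicDenom_zero]
    positivity
  have hsum := cubicSum_sq hd hdenom
  rw [mul_sum, sum_congr rfl fun k _ => hterm k, zero_pow two_ne_zero, cubicDenom_zero] at hsum
  rw [cubicDefect, hsum, cubicDenom_zero]
  ring

end Evaluation

section Congruence

open Polynomial

lemma mul_sub_dvd_eval_sub_of_C_dvd {R : Type*} [CommRing R] {r : R} {f : R[X]} (h : C r ∣ f)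
    (a b : R) : r * (a - b) ∣ f.eval a - f.eval b := by
  obtain ⟨g, rfl⟩ := h
  simpa only [eval_mul, eval_C, ← mul_sub] using mul_dvd_mul_left r (sub_dvd_eval_sub a b g)

theorem pow_three_dvd_cubicDefect_zero {d : ℤ} {n : ℕ} (hd : 0 < d)
    (h2 : IsCoprime (n * d + 1) 2) : (n * d + 1) ^ 3 ∣ cubicDefect d 0 n := by
  let f : ℤ[X] := cubicDefect (C d) X n
  have hf (y : ℤ) : f.eval y = cubicDefect d y n := by
    simpa only [coe_evalRingHom, eval_C, eval_X] using map_cubicDefect (evalRingHom y) (C d) X n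
  have hN : (n * C d + 1 : ℤ[X]) = C (n * d + 1) := by simp
  have h2' : IsCoprime (n * C d + 1 : ℤ[X]) 2 := by simpa using h2.map (C : ℤ →+* ℤ[X])
  have hdvd : C (n * d + 1) ∣ f := hN ▸ dvd_cubicDefect X h2'
  have hroot : f.eval ((n * d + 1) ^ 2) = 0 := by
    rw [hf]
    apply Int.cast_injective (α := ℚ)
    rw [intCast_cubicDefect]
    push_cast
    exact cubicDefect_sq_mul_add_one (by exact_mod_cast hd) n
  have h := mul_sub_dvd_eval_sub_of_C_dvd hdvd ((n * d + 1) ^ 2) 0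
  rw [hroot, hf, zero_sub, dvd_neg, sub_zero, ← pow_succ'] at h
  exact h

end Congruence

section Padic

lemma norm_ratCast_le_of_dvd {p : ℕ} [Fact p.Prime] {m k : ℕ} {z : ℤ} {q : ℚ}
    (hm : p.Coprime m) (hz : (z : ℚ) = m * q) (hdvd : (p : ℤ) ^ k ∣ z) :
    ‖(q : ℚ_[p])‖ ≤ (p : ℝ) ^ (-k : ℤ) := by
  have hz' : (z : ℚ_[p]) = m * q := by exact_mod_cast congrArg (Rat.cast : ℚ → ℚ_[p]) hz
  have hnorm : ‖(m : ℚ_[p])‖ = 1 := Padic.norm_natCast_eq_one_iff.mpr hm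
  rw [← one_mul ‖(q : ℚ_[p])‖, ← hnorm, ← norm_mul, ← hz']
  exact (Padic.norm_int_le_pow_iff_dvd z k).mpr hdvd

lemma pos_and_odd_of_mod_eq_one {p d : ℕ} (hp : p.Prime) (hpd : p % d = 1) : 0 < d ∧ Odd p := by
  refine ⟨Nat.pos_of_ne_zero fun h => hp.ne_one (by simpa [h] using hpd), ?_⟩
  refine hp.eq_two_or_odd'.resolve_left fun h2 => ?_
  subst h2
  have hdvd : d ∣ 1 := by simpa [hpd] using Nat.dvd_sub_mod (n := d) 2
  simp [Nat.dvd_one.mp hdvd] at hpd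

lemma coprime_pow_mul_factorial {p d n : ℕ} (hp : p.Prime) (hd : 0 < d) (h : p = n * d + 1) :
    p.Coprime (d ^ n * n.factorial) := by
  have hpd : p.Coprime d := by simp [h]
  have hn : n < p := by nlinarith
  exact (hpd.pow_right n).mul_right ((hp.coprime_iff_not_dvd).mpr fun hdvd =>
    hn.not_ge ((hp.dvd_factorial).mp hdvd))

end Padic

theorem stmt17_general (p d : ℕ) [Fact p.Prime] (hpd : p % d = 1) :
    ‖(((∑ k ∈ Finset.range ((p - 1) / d + 1),
          (-1 : ℚ) ^ k * (2 * (d : ℚ) * k + 1) * poch (1 / (d : ℚ)) k ^ 3 /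
            ((k.factorial : ℚ)) ^ 3) -
        ((-1 : ℚ) ^ ((p - 1) / d) * p) : ℚ) : ℚ_[p])‖ ≤
      (p : ℝ) ^ (-3 : ℤ) := by
  have hp : p.Prime := Fact.out
  obtain ⟨hd, hodd⟩ := pos_and_odd_of_mod_eq_one hp hpd
  generalize hn : (p - 1) / d = n
  have hpn : p = n * d + 1 := by
    rw [← hn, Nat.div_mul_cancel (hpd ▸ Nat.dvd_sub_mod p), Nat.sub_add_cancel hp.one_le]
  have hpq : (n * d + 1 : ℚ) = p := by exact_mod_cast hpn.symm
  have hpz : (n * d + 1 : ℤ) = p := by exact_mod_cast hpn.symm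
  have h2 : IsCoprime (n * d + 1 : ℤ) 2 := by
    rw [hpz]
    exact_mod_cast Nat.isCoprime_iff_coprime.mpr hodd.coprime_two_right
  refine norm_ratCast_le_of_dvd ((coprime_pow_mul_factorial hp hd hpn).pow_right 3) ?_
    (hpz ▸ pow_three_dvd_cubicDefect_zero (by exact_mod_cast hd) h2)
  rw [intCast_cubicDefect, ← hpq]
  push_cast
  exact cubicDefect_zero (by exact_mod_cast hd.ne') n

theorem stmt17 (p d : ℕ) [Fact p.Prime] (hodd : Odd p) (hd : 0 < d)
    (hdeven : Even d) (hpd : p % d = 1) :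
    ‖(((∑ k ∈ Finset.range ((p - 1) / d + 1),
          (-1 : ℚ) ^ k * (2 * (d : ℚ) * k + 1) * poch (1 / (d : ℚ)) k ^ 3 /
            ((k.factorial : ℚ)) ^ 3) -
        ((-1 : ℚ) ^ ((p - 1) / d) * p) : ℚ) : ℚ_[p])‖ ≤
      (p : ℝ) ^ (-3 : ℤ) :=
  stmt17_general p d hpd
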